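/- arXiv:1912.02369 — 2 statements merged into one kernel-verified Lean document; each statement's English description precedes it below -/
import Mathlib

section
/- Let Γ ≤ SL(3,ℂ) be a discrete subgroup whose action on the projective plane ℙ(ℂ³) is strongly irreducible, meaning that no finite-index subgroup of Γ leaves invariant a linear subspace V of ℂ³ with 0 < dim V < 3, and suppose Γ is a complex Kleinian group, i.e. there is a nonempty open Γ-invariant subset U of ℙ(ℂ³) on which the induced action of Γ is properly discontinuous (for every compact K ⊆ U, the set of γ ∈ Γ with γ·K ∩ K ≠ ∅ is finite). Then Γ contains a free subgroup of rank 2: there exist a, b ∈ Γ such that the subgroup they generate is free on {a, b}. -/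
noncomputable instance : TopologicalSpace (Matrix.SpecialLinearGroup (Fin 3) ℂ) :=
  inferInstanceAs (TopologicalSpace {A : Matrix (Fin 3) (Fin 3) ℂ // A.det = 1})

/-- The quotient topology on the complex projective plane `ℙ(ℂ³)`. -/
noncomputable instance : TopologicalSpace (Projectivization ℂ (Fin 3 → ℂ)) :=
  inferInstanceAs (TopologicalSpace (Quotient (projectivizationSetoid ℂ (Fin 3 → ℂ))))

lemma slToLin'_injective (g : Matrix.SpecialLinearGroup (Fin 3) ℂ) :
    Function.Injective (Matrix.toLin' (g : Matrix (Fin 3) (Fin 3) ℂ)) := by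
  have hinv : ((g⁻¹ : Matrix.SpecialLinearGroup (Fin 3) ℂ) : Matrix (Fin 3) (Fin 3) ℂ) *
      (g : Matrix (Fin 3) (Fin 3) ℂ) = 1 := by
    rw [← Matrix.SpecialLinearGroup.coe_mul]
    simp
  have h : Function.LeftInverse
      (Matrix.toLin' ((g⁻¹ : Matrix.SpecialLinearGroup (Fin 3) ℂ) : Matrix (Fin 3) (Fin 3) ℂ))
      (Matrix.toLin' (g : Matrix (Fin 3) (Fin 3) ℂ)) := by
    intro v
    rw [Matrix.toLin'_apply, Matrix.toLin'_apply, Matrix.mulVec_mulVec, hinv,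
      Matrix.one_mulVec]
  exact h.injective

/-- The induced action of an element of `SL(3, ℂ)` on the projective plane `ℙ(ℂ³)`. -/
noncomputable def projAct (g : Matrix.SpecialLinearGroup (Fin 3) ℂ) :
    Projectivization ℂ (Fin 3 → ℂ) → Projectivization ℂ (Fin 3 → ℂ) :=
  Projectivization.map (Matrix.toLin' (g : Matrix (Fin 3) (Fin 3) ℂ)) (slToLin'_injective g)


section GP
open Matrix

variable {G : Type*} [Group G]

/-- Generators of the coordinate ring. -/
def coordGen (ρ : G →* Matrix (Fin 3) (Fin 3) ℂ) : (Fin 3 × Fin 3) ⊕ (Fin 3 × Fin 3) → (G → ℂ)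
  | Sum.inl p => fun g => ρ g p.1 p.2
  | Sum.inr p => fun g => ρ g⁻¹ p.1 p.2

/-- The algebra of regular functions on the group. -/
def coordAlg (ρ : G →* Matrix (Fin 3) (Fin 3) ℂ) : Subalgebra ℂ (G → ℂ) :=
  Algebra.adjoin ℂ (Set.range (coordGen ρ))

lemma coordAlg_noeth (ρ : G →* Matrix (Fin 3) (Fin 3) ℂ) : IsNoetherianRing (coordAlg ρ) := by
  have hfg : (coordAlg ρ).FG := by
    rw [Subalgebra.fg_def]
    exact ⟨_, Set.finite_range (coordGen ρ), rfl⟩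
  have : Algebra.FiniteType ℂ (coordAlg ρ) := (Subalgebra.fg_iff_finiteType _).1 hfg
  exact Algebra.FiniteType.isNoetherianRing ℂ _

lemma entry_mem (ρ : G →* Matrix (Fin 3) (Fin 3) ℂ) (i j : Fin 3) :
    (fun g => ρ g i j) ∈ coordAlg ρ :=
  Algebra.subset_adjoin ⟨Sum.inl (i, j), rfl⟩

lemma entry_inv_mem (ρ : G →* Matrix (Fin 3) (Fin 3) ℂ) (i j : Fin 3) :
    (fun g => ρ g⁻¹ i j) ∈ coordAlg ρ :=
  Algebra.subset_adjoin ⟨Sum.inr (i, j), rfl⟩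

lemma pair_mem (ρ : G →* Matrix (Fin 3) (Fin 3) ℂ) (f u : Fin 3 → ℂ) :
    (fun g => f ⬝ᵥ (ρ g *ᵥ u)) ∈ coordAlg ρ := by
  have : (fun g => f ⬝ᵥ (ρ g *ᵥ u)) = ∑ i, ∑ j, (f i * u j) • (fun g => ρ g i j) := by
    funext g
    simp [dotProduct, mulVec, Finset.mul_sum, Finset.sum_apply]
    simp only [Fin.sum_univ_three]; ring
  rw [this]
  exact Subalgebra.sum_mem _ fun i _ => Subalgebra.sum_mem _ fun j _ =>
    Subalgebra.smul_mem _ (entry_mem ρ i j) _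

lemma pair_inv_mem (ρ : G →* Matrix (Fin 3) (Fin 3) ℂ) (f u : Fin 3 → ℂ) :
    (fun g => f ⬝ᵥ (ρ g⁻¹ *ᵥ u)) ∈ coordAlg ρ := by
  have : (fun g => f ⬝ᵥ (ρ g⁻¹ *ᵥ u)) = ∑ i, ∑ j, (f i * u j) • (fun g => ρ g⁻¹ i j) := by
    funext g
    simp [dotProduct, mulVec, Finset.mul_sum, Finset.sum_apply]
    simp only [Fin.sum_univ_three]; ring
  rw [this]
  exact Subalgebra.sum_mem _ fun i _ => Subalgebra.sum_mem _ fun j _ =>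
    Subalgebra.smul_mem _ (entry_inv_mem ρ i j) _

/-- translation on functions -/
def transFun (h k : G) : (G → ℂ) →ₐ[ℂ] (G → ℂ) where
  toFun F := fun g => F (h⁻¹ * g * k)
  map_one' := rfl
  map_mul' _ _ := rfl
  map_zero' := rfl
  map_add' _ _ := rfl
  commutes' _ := rfl

lemma entry_eq_pair (M : Matrix (Fin 3) (Fin 3) ℂ) (i j : Fin 3) :
    M i j = Pi.single i 1 ⬝ᵥ (M *ᵥ Pi.single j 1) := by
  simp

lemma three_pair (A M B : Matrix (Fin 3) (Fin 3) ℂ) (f u : Fin 3 → ℂ) :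
    f ⬝ᵥ ((A * M * B) *ᵥ u) = (f ᵥ* A) ⬝ᵥ (M *ᵥ (B *ᵥ u)) := by
  rw [← dotProduct_mulVec, mulVec_mulVec, mulVec_mulVec]

lemma transFun_mem (ρ : G →* Matrix (Fin 3) (Fin 3) ℂ) (h k : G) :
    coordAlg ρ ≤ (coordAlg ρ).comap (transFun h k) := by
  refine Algebra.adjoin_le ?_
  rintro _ ⟨(⟨i, j⟩ | ⟨i, j⟩), rfl⟩
  · have : transFun h k (coordGen ρ (Sum.inl (i, j))) = fun g =>
        (Pi.single i 1 ᵥ* ρ h⁻¹) ⬝ᵥ (ρ g *ᵥ (ρ k *ᵥ Pi.single j 1)) := by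
      funext g
      rw [← three_pair, ← map_mul, ← map_mul, ← entry_eq_pair]; rfl
    simp only [SetLike.mem_coe, Subalgebra.mem_comap]
    rw [this]; exact pair_mem ρ _ _
  · have : transFun h k (coordGen ρ (Sum.inr (i, j))) = fun g =>
        (Pi.single i 1 ᵥ* ρ k⁻¹) ⬝ᵥ (ρ g⁻¹ *ᵥ (ρ h *ᵥ Pi.single j 1)) := by
      funext g
      rw [← three_pair, ← map_mul, ← map_mul, ← entry_eq_pair]
      have : k⁻¹ * g⁻¹ * h = (h⁻¹ * g * k)⁻¹ := by group
      rw [this]; rfl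
    simp only [SetLike.mem_coe, Subalgebra.mem_comap]
    rw [this]; exact pair_inv_mem ρ _ _

/-- translation on the coordinate algebra -/
def tlate (ρ : G →* Matrix (Fin 3) (Fin 3) ℂ) (h k : G) : coordAlg ρ →+* coordAlg ρ :=
  (((transFun h k).comp (coordAlg ρ).val).codRestrict (coordAlg ρ)
    (fun x => transFun_mem ρ h k x.2)).toRingHom

lemma tlate_apply (ρ : G →* Matrix (Fin 3) (Fin 3) ℂ) (h k : G) (F : coordAlg ρ) (g : G) :
    (tlate ρ h k F).1 g = F.1 (h⁻¹ * g * k) := rfl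

lemma exists_fix {A : Type*} [CommRing A] [IsNoetherianRing A] (T : G → A →+* A)
    (h1 : T 1 = RingHom.id A) (hm : ∀ a b, T (a * b) = (T a).comp (T b))
    (p : Ideal A) (hp : p ∈ minimalPrimes A) :
    ∃ H : Subgroup G, H.FiniteIndex ∧ ∀ h ∈ H, ∀ F ∈ p, T h F ∈ p := by
  have hinv : ∀ a x, T a (T a⁻¹ x) = x := fun a x => by
    rw [← RingHom.comp_apply, ← hm, mul_inv_cancel, h1]; rfl
  have hinv' : ∀ a x, T a⁻¹ (T a x) = x := fun a x => by
    rw [← RingHom.comp_apply, ← hm, inv_mul_cancel, h1]; rfl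
  have hmem : ∀ a, ∀ q ∈ minimalPrimes A, q.comap (T a) ∈ minimalPrimes A := by
    intro a q hq
    have hs : Function.Surjective (T a) := fun x => ⟨_, hinv a x⟩
    have h2 := Ideal.minimalPrimes_comap_of_surjective hs hq
    have h3 : Ideal.comap (T a) (⊥ : Ideal A) = ⊥ := by
      rw [← RingHom.ker_eq_comap_bot]
      exact (RingHom.injective_iff_ker_eq_bot _).1 (Function.LeftInverse.injective (hinv' a))
    rw [h3] at h2
    exact h2
  let act : MulAction G (minimalPrimes A) :=
    { smul := fun g q => ⟨q.1.comap (T g⁻¹), hmem _ _ q.2⟩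
      one_smul := fun q => Subtype.ext (by
        change q.1.comap (T 1⁻¹) = q.1
        rw [inv_one, h1]; exact Ideal.comap_id _)
      mul_smul := fun a b q => Subtype.ext (by
        change q.1.comap (T (a * b)⁻¹) = (q.1.comap (T b⁻¹)).comap (T a⁻¹)
        rw [Ideal.comap_comap, ← hm, _root_.mul_inv_rev]) }
  have : Finite (minimalPrimes A) := (minimalPrimes.finite_of_isNoetherianRing A).to_subtype
  refine ⟨(MulAction.toPermHom G (minimalPrimes A)).ker, inferInstance, fun h hh F hF => ?_⟩
  rw [MonoidHom.mem_ker] at hh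
  have h5 : h • (⟨p, hp⟩ : minimalPrimes A) = ⟨p, hp⟩ := by
    have := congrArg (fun e => e (⟨p, hp⟩ : minimalPrimes A)) hh
    exact this
  have h6 : p.comap (T h⁻¹) = p := congrArg Subtype.val h5
  rw [← h6, Ideal.mem_comap, hinv']
  exact hF

lemma not_mem_prime {A : Type*} [CommRing A] [Algebra ℂ A] [IsNoetherianRing A] (T : G → A →+* A)
    (h1 : T 1 = RingHom.id A) (hm : ∀ a b, T (a * b) = (T a).comp (T b))
    (ρ : G →* Matrix (Fin 3) (Fin 3) ℂ)
    (hirr : ∀ (H : Subgroup G), H.FiniteIndex → ∀ V : Submodule ℂ (Fin 3 → ℂ), V ≠ ⊥ →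
      (∀ h ∈ H, ∀ v ∈ V, ρ h *ᵥ v ∈ V) → V = ⊤)
    (p : Ideal A) (hp : p ∈ minimalPrimes A) (E : (Fin 3 → ℂ) →ₗ[ℂ] A)
    (hE : ∀ h u, T h (E u) = E (ρ h *ᵥ u)) (hne : ∃ u, E u ∉ p) (u : Fin 3 → ℂ) (hu : u ≠ 0) :
    E u ∉ p := by
  intro hup
  obtain ⟨H, hH, hfix⟩ := exists_fix T h1 hm p hp
  obtain ⟨w, hw⟩ := hne
  have := hirr H hH ((p.restrictScalars ℂ).comap E) ?_ ?_
  · apply hw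
    have h3 : w ∈ (p.restrictScalars ℂ).comap E := by rw [this]; trivial
    exact h3
  · intro h0
    have h3 : u ∈ (p.restrictScalars ℂ).comap E := hup
    rw [h0] at h3
    exact hu h3
  · intro h hh v hv
    have : T h (E v) ∈ p := hfix h hh _ hv
    rw [hE] at this
    exact this

/-- general position -/
theorem general_position (ρ : G →* Matrix (Fin 3) (Fin 3) ℂ)
    (hirr : ∀ (H : Subgroup G), H.FiniteIndex → ∀ V : Submodule ℂ (Fin 3 → ℂ), V ≠ ⊥ →
      (∀ h ∈ H, ∀ v ∈ V, ρ h *ᵥ v ∈ V) → V = ⊤)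
    {ι κ : Type*} (S : Finset ι) (S' : Finset κ) (f u : ι → Fin 3 → ℂ) (f' u' : κ → Fin 3 → ℂ)
    (hf : ∀ i ∈ S, f i ≠ 0) (hu : ∀ i ∈ S, u i ≠ 0)
    (hf' : ∀ i ∈ S', f' i ≠ 0) (hu' : ∀ i ∈ S', u' i ≠ 0) :
    ∃ g : G, (∀ i ∈ S, f i ⬝ᵥ (ρ g *ᵥ u i) ≠ 0) ∧ (∀ i ∈ S', f' i ⬝ᵥ (ρ g⁻¹ *ᵥ u' i) ≠ 0) := by
  have := coordAlg_noeth ρ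
  have : Nontrivial (coordAlg ρ) := inferInstance
  obtain ⟨p, hp⟩ : (minimalPrimes (coordAlg ρ)).Nonempty :=
    Set.nonempty_coe_sort.1 (Ideal.nonempty_minimalPrimes (by simp))
  have hpp : p.IsPrime := hp.1.1
  -- linear maps
  let E : (Fin 3 → ℂ) → (Fin 3 → ℂ) →ₗ[ℂ] coordAlg ρ := fun φ =>
    { toFun := fun v => ⟨fun g => φ ⬝ᵥ (ρ g *ᵥ v), pair_mem ρ φ v⟩
      map_add' := fun a b => Subtype.ext (by funext g; simp [mulVec_add])
      map_smul' := fun a b => Subtype.ext (by funext g; simp [mulVec_smul]) }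
  let E' : (Fin 3 → ℂ) → (Fin 3 → ℂ) →ₗ[ℂ] coordAlg ρ := fun φ =>
    { toFun := fun v => ⟨fun g => φ ⬝ᵥ (ρ g⁻¹ *ᵥ v), pair_inv_mem ρ φ v⟩
      map_add' := fun a b => Subtype.ext (by funext g; simp [mulVec_add])
      map_smul' := fun a b => Subtype.ext (by funext g; simp [mulVec_smul]) }
  have hconst : ∀ φ : Fin 3 → ℂ, φ ≠ 0 → ∃ k, (algebraMap ℂ (coordAlg ρ) (φ k)) ∉ p := by
    intro φ hφ
    obtain ⟨k, hk⟩ := Function.ne_iff.1 hφ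
    refine ⟨k, fun hmem => hpp.ne_top ?_⟩
    exact Ideal.eq_top_of_isUnit_mem _ hmem ((IsUnit.mk0 _ hk).map _)
  have hE : ∀ φ, φ ≠ 0 → ∀ v, v ≠ 0 → E φ v ∉ p := by
    intro φ hφ v hv
    refine not_mem_prime (fun h => tlate ρ 1 h) ?_ ?_ ρ hirr p hp (E φ) ?_ ?_ v hv
    · ext F g; simp [tlate_apply]
    · intro a b; ext F g; simp [tlate_apply, mul_assoc]
    · intro h w; ext g
      rw [tlate_apply]
      change φ ⬝ᵥ (ρ (1⁻¹ * g * h) *ᵥ w) = φ ⬝ᵥ (ρ g *ᵥ (ρ h *ᵥ w))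
      rw [inv_one, one_mul, map_mul, mulVec_mulVec]
    · by_contra hall
      push Not at hall
      obtain ⟨k, hk⟩ := hconst φ hφ
      apply hk
      have : algebraMap ℂ (coordAlg ρ) (φ k) =
          ∑ j, (⟨_, entry_inv_mem ρ j k⟩ : coordAlg ρ) * E φ (Pi.single j 1) := by
        ext g
        simp only [AddSubmonoidClass.coe_finsetSum, MulMemClass.coe_mul, Finset.sum_apply,
          Pi.mul_apply]
        change φ k = ∑ j, ρ g⁻¹ j k * (φ ⬝ᵥ (ρ g *ᵥ Pi.single j 1))
        have h2 : φ k = ((φ ᵥ* ρ g) ᵥ* ρ g⁻¹) k := by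
          rw [vecMul_vecMul, ← map_mul]; simp
        rw [h2]
        conv_lhs => rw [vecMul, dotProduct]
        refine Finset.sum_congr rfl fun j _ => ?_
        rw [dotProduct_mulVec]; simp [mul_comm]
      rw [this]
      exact Ideal.sum_mem _ fun j _ => Ideal.mul_mem_left _ _ (hall _)
  have hE' : ∀ φ, φ ≠ 0 → ∀ v, v ≠ 0 → E' φ v ∉ p := by
    intro φ hφ v hv
    refine not_mem_prime (fun h => tlate ρ h 1) ?_ ?_ ρ hirr p hp (E' φ) ?_ ?_ v hv
    · ext F g; simp [tlate_apply]
    · intro a b; ext F g; simp [tlate_apply, mul_assoc]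
    · intro h w; ext g
      rw [tlate_apply]
      change φ ⬝ᵥ (ρ (h⁻¹ * g * 1)⁻¹ *ᵥ w) = φ ⬝ᵥ (ρ g⁻¹ *ᵥ (ρ h *ᵥ w))
      rw [mul_one, _root_.mul_inv_rev, inv_inv, map_mul, mulVec_mulVec]
    · by_contra hall
      push Not at hall
      obtain ⟨k, hk⟩ := hconst φ hφ
      apply hk
      have : algebraMap ℂ (coordAlg ρ) (φ k) =
          ∑ j, (⟨_, entry_mem ρ j k⟩ : coordAlg ρ) * E' φ (Pi.single j 1) := by
        ext g
        simp only [AddSubmonoidClass.coe_finsetSum, MulMemClass.coe_mul, Finset.sum_apply,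
          Pi.mul_apply]
        change φ k = ∑ j, ρ g j k * (φ ⬝ᵥ (ρ g⁻¹ *ᵥ Pi.single j 1))
        have h2 : φ k = ((φ ᵥ* ρ g⁻¹) ᵥ* ρ g) k := by
          rw [vecMul_vecMul, ← map_mul]; simp
        rw [h2]
        conv_lhs => rw [vecMul, dotProduct]
        refine Finset.sum_congr rfl fun j _ => ?_
        rw [dotProduct_mulVec]; simp [mul_comm]
      rw [this]
      exact Ideal.sum_mem _ fun j _ => Ideal.mul_mem_left _ _ (hall _)
  have hprod : (∏ i ∈ S, E (f i) (u i)) * (∏ i ∈ S', E' (f' i) (u' i)) ∉ p := by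
    intro hmem
    rcases hpp.mem_or_mem hmem with h | h
    · obtain ⟨i, hi, h⟩ := (hpp.prod_mem_iff).1 h
      exact hE _ (hf i hi) _ (hu i hi) h
    · obtain ⟨i, hi, h⟩ := (hpp.prod_mem_iff).1 h
      exact hE' _ (hf' i hi) _ (hu' i hi) h
  have hne0 : ((∏ i ∈ S, E (f i) (u i)) * (∏ i ∈ S', E' (f' i) (u' i))).1 ≠ 0 := by
    intro h0
    apply hprod
    have : (∏ i ∈ S, E (f i) (u i)) * (∏ i ∈ S', E' (f' i) (u' i)) = 0 := Subtype.ext h0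
    rw [this]; exact p.zero_mem
  obtain ⟨g, hg⟩ := Function.ne_iff.1 hne0
  have hg2 : (∏ i ∈ S, f i ⬝ᵥ (ρ g *ᵥ u i)) * (∏ i ∈ S', f' i ⬝ᵥ (ρ g⁻¹ *ᵥ u' i)) ≠ 0 := by
    have e : ((∏ i ∈ S, E (f i) (u i)) * (∏ i ∈ S', E' (f' i) (u' i))).1 g =
      (∏ i ∈ S, f i ⬝ᵥ (ρ g *ᵥ u i)) * (∏ i ∈ S', f' i ⬝ᵥ (ρ g⁻¹ *ᵥ u' i)) := by
      simp only [MulMemClass.coe_mul, SubmonoidClass.coe_finsetProd, Pi.mul_apply,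
        Finset.prod_apply]
      rfl
    rw [← e]; exact hg
  have h7 := mul_ne_zero_iff.1 hg2
  exact ⟨g, fun i hi => Finset.prod_ne_zero_iff.1 h7.1 i hi,
    fun i hi => Finset.prod_ne_zero_iff.1 h7.2 i hi⟩

end GP

section PP
open Matrix Filter Topology

variable {G : Type*} [Group G]

/-- scaled pairs -/
def pairSet (ρ : G →* Matrix (Fin 3) (Fin 3) ℂ) :
    Set (Matrix (Fin 3) (Fin 3) ℂ × Matrix (Fin 3) (Fin 3) ℂ) :=
  {x | ∃ (g : G) (s t : ℂ), x = (s • ρ g, t • ρ g⁻¹)}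

/-- entrywise sup norm -/
noncomputable def nrm (M : Matrix (Fin 3) (Fin 3) ℂ) : ℝ := ‖(fun i j => M i j : Fin 3 → Fin 3 → ℂ)‖

lemma nrm_smul (c : ℂ) (M : Matrix (Fin 3) (Fin 3) ℂ) : nrm (c • M) = ‖c‖ * nrm M :=
  norm_smul c (fun i j => M i j : Fin 3 → Fin 3 → ℂ)

lemma nrm_ne_zero {M : Matrix (Fin 3) (Fin 3) ℂ} (h : M ≠ 0) : nrm M ≠ 0 := by
  intro h0
  apply h
  have h1 := norm_eq_zero.1 h0
  ext i j
  exact congrFun (congrFun h1 i) j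

lemma nrm_zero : nrm 0 = 0 := norm_zero (E := Fin 3 → Fin 3 → ℂ)

lemma le_nrm (M : Matrix (Fin 3) (Fin 3) ℂ) (i j : Fin 3) : ‖M i j‖ ≤ nrm M :=
  (norm_le_pi_norm (fun j => M i j) j).trans
    (norm_le_pi_norm (fun i j => M i j : Fin 3 → Fin 3 → ℂ) i)

lemma nrm_subseq (M N : ℕ → Matrix (Fin 3) (Fin 3) ℂ) (hM : ∀ n, nrm (M n) = 1)
    (hN : ∀ n, nrm (N n) = 1) : ∃ A B, nrm A = 1 ∧ nrm B = 1 ∧ ∃ θ : ℕ → ℕ, StrictMono θ ∧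
      Tendsto (fun n => M (θ n)) atTop (𝓝 A) ∧ Tendsto (fun n => N (θ n)) atTop (𝓝 B) := by
  have hcomp : IsCompact ((Metric.sphere (0 : Fin 3 → Fin 3 → ℂ) 1) ×ˢ
      (Metric.sphere (0 : Fin 3 → Fin 3 → ℂ) 1)) :=
    (isCompact_sphere _ _).prod (isCompact_sphere _ _)
  obtain ⟨⟨A, B⟩, hAB, θ, hθ, hconv⟩ := hcomp.tendsto_subseq
    (x := fun n => ((fun i j => M n i j : Fin 3 → Fin 3 → ℂ),
      (fun i j => N n i j : Fin 3 → Fin 3 → ℂ)))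
    (fun n => ⟨mem_sphere_zero_iff_norm.2 (hM n), mem_sphere_zero_iff_norm.2 (hN n)⟩)
  have hA := (continuous_fst.tendsto (A, B)).comp hconv
  have hB := (continuous_snd.tendsto (A, B)).comp hconv
  exact ⟨Matrix.of A, Matrix.of B, mem_sphere_zero_iff_norm.1 hAB.1,
    mem_sphere_zero_iff_norm.1 hAB.2, θ, hθ, hA, hB⟩

lemma exists_limit_pair (ρ : G →* Matrix (Fin 3) (Fin 3) ℂ) (hdet : ∀ g, (ρ g).det = 1)
    (hunb : ∀ R : ℝ, ∃ g i j, R < ‖ρ g i j‖) :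
    ∃ A B, (A, B) ∈ closure (pairSet ρ) ∧ A ≠ 0 ∧ B ≠ 0 ∧ A * B = 0 := by
  have hne : ∀ g, ρ g ≠ 0 := by
    intro g h
    have := hdet g
    rw [h] at this
    simp at this
  choose g i j hg' using fun n : ℕ => hunb n
  have hg : ∀ n : ℕ, (n : ℝ) < nrm (ρ (g n)) := fun n => (hg' n).trans_le (le_nrm _ _ _)
  have hlim : Tendsto (fun n => nrm (ρ (g n))) atTop atTop :=
    tendsto_atTop_mono (fun n => (hg n).le) tendsto_natCast_atTop_atTop
  let M : ℕ → Matrix (Fin 3) (Fin 3) ℂ := fun n => ((nrm (ρ (g n)) : ℂ)⁻¹) • ρ (g n)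
  let N : ℕ → Matrix (Fin 3) (Fin 3) ℂ := fun n => ((nrm (ρ (g n)⁻¹) : ℂ)⁻¹) • ρ (g n)⁻¹
  have hnn : ∀ M, 0 ≤ nrm M := fun M => norm_nonneg _
  have hM : ∀ n, nrm (M n) = 1 := fun n => by
    have := nrm_ne_zero (hne (g n))
    simp only [M, nrm_smul, norm_inv, Complex.norm_real, Real.norm_of_nonneg (hnn _)]
    field_simp
  have hN : ∀ n, nrm (N n) = 1 := fun n => by
    have := nrm_ne_zero (hne (g n)⁻¹)
    simp only [N, nrm_smul, norm_inv, Complex.norm_real, Real.norm_of_nonneg (hnn _)]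
    field_simp
  obtain ⟨A, B, hA1, hB1, θ, hθ, hA, hB⟩ := nrm_subseq M N hM hN
  have hconv : Tendsto (fun n => (M (θ n), N (θ n))) atTop (𝓝 (A, B)) := hA.prodMk_nhds hB
  refine ⟨A, B, mem_closure_of_tendsto hconv (Eventually.of_forall fun n => ⟨_, _, _, rfl⟩),
    fun h => by simp [h, nrm_zero] at hA1, fun h => by simp [h, nrm_zero] at hB1, ?_⟩
  have hdetA : A.det = 0 := by
    have h1 : Tendsto (fun n => (M (θ n)).det) atTop (𝓝 A.det) :=
      ((continuous_id.matrix_det).tendsto A).comp hA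
    have h2 : Tendsto (fun n => (M (θ n)).det) atTop (𝓝 0) := by
      have h3 : ∀ n, (M (θ n)).det = (((nrm (ρ (g (θ n))))⁻¹ ^ 3 : ℝ) : ℂ) := fun n => by
        simp [M, hdet]
      simp only [h3]
      have h4 : Tendsto (fun n => ((nrm (ρ (g (θ n))))⁻¹ ^ 3 : ℝ)) atTop (𝓝 0) := by
        have := ((tendsto_inv_atTop_zero.comp hlim).comp hθ.tendsto_atTop).pow 3
        simpa using this
      exact_mod_cast (Complex.continuous_ofReal.tendsto 0).comp h4
    exact tendsto_nhds_unique h1 h2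
  have hprod : Tendsto (fun n => M (θ n) * N (θ n)) atTop (𝓝 (A * B)) := by
    have hc : Continuous (fun x : Matrix (Fin 3) (Fin 3) ℂ × Matrix (Fin 3) (Fin 3) ℂ =>
      x.1 * x.2) := by fun_prop
    have h1 := (hc.tendsto (A, B)).comp hconv
    exact h1
  have hsc : ∀ n, ∃ c : ℂ, M n * N n = c • (1 : Matrix (Fin 3) (Fin 3) ℂ) := fun n => by
    refine ⟨((nrm (ρ (g n)) : ℂ)⁻¹) * ((nrm (ρ (g n)⁻¹) : ℂ)⁻¹), ?_⟩
    simp only [M, N, smul_mul_smul_comm, ← map_mul, mul_inv_cancel, map_one]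
  choose c hc using hsc
  have hc0 : Tendsto (fun n => c (θ n)) atTop (𝓝 ((A * B) 0 0)) := by
    have h1 := ((continuous_id.matrix_elem 0 0).tendsto (A * B)).comp hprod
    refine h1.congr fun n => ?_
    simp [hc]
  have hABs : A * B = (A * B) 0 0 • (1 : Matrix (Fin 3) (Fin 3) ℂ) := by
    refine tendsto_nhds_unique hprod ?_
    refine (hc0.smul_const (1 : Matrix (Fin 3) (Fin 3) ℂ)).congr fun n => (hc _).symm
  have h5 : (A * B).det = 0 := by rw [det_mul, hdetA, zero_mul]
  rw [hABs, det_smul] at h5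
  simp at h5
  rw [hABs]
  simp [h5]

lemma rank_one_form (A : Matrix (Fin 3) (Fin 3) ℂ) (hA : A.rank ≤ 1) :
    ∃ v f, A = vecMulVec v f := by
  rw [Matrix.rank, finrank_le_one_iff] at hA
  obtain ⟨⟨v, hv⟩, h⟩ := hA
  choose c hc using fun j => h ⟨A *ᵥ Pi.single j 1, ⟨_, rfl⟩⟩
  refine ⟨v, c, ?_⟩
  ext i j
  have := congrArg (fun x => x.1 i) (hc j)
  simp at this
  rw [vecMulVec_apply, ← this, mul_comm]

lemma rank_one_of_mul (A B : Matrix (Fin 3) (Fin 3) ℂ) (h : A * B = 0) :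
    (∃ v f, A = vecMulVec v f) ∨ (∃ v f, B = vecMulVec v f) := by
  have h1 : A.rank + B.rank ≤ 3 := by
    have := Matrix.rank_add_rank_le_card_of_mul_eq_zero h
    simpa using this
  by_cases h2 : A.rank ≤ 1
  · exact Or.inl (rank_one_form A h2)
  · exact Or.inr (rank_one_form B (by omega))

lemma pairSet_swap (ρ : G →* Matrix (Fin 3) (Fin 3) ℂ) {A B}
    (h : (A, B) ∈ closure (pairSet ρ)) : (B, A) ∈ closure (pairSet ρ) := by
  refine map_mem_closure (f := Prod.swap) continuous_swap h ?_
  rintro _ ⟨g, s, t, rfl⟩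
  exact ⟨g⁻¹, t, s, by simp⟩

lemma pairSet_conj (ρ : G →* Matrix (Fin 3) (Fin 3) ℂ) {A B}
    (h : (A, B) ∈ closure (pairSet ρ)) (k : G) :
    (A * ρ k * B, A * ρ k⁻¹ * B) ∈ closure (pairSet ρ) := by
  have hc : Continuous (fun x : Matrix (Fin 3) (Fin 3) ℂ × Matrix (Fin 3) (Fin 3) ℂ =>
    (x.1 * ρ k * x.2, x.1 * ρ k⁻¹ * x.2)) := by
    refine Continuous.prodMk ?_ ?_ <;> fun_prop
  suffices hm : Set.MapsTo (fun x : Matrix (Fin 3) (Fin 3) ℂ × Matrix (Fin 3) (Fin 3) ℂ =>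
    (x.1 * ρ k * x.2, x.1 * ρ k⁻¹ * x.2)) (pairSet ρ) (pairSet ρ) by
    have h3 := map_mem_closure hc h hm
    exact h3
  rintro _ ⟨g, s, t, rfl⟩
  refine ⟨g * k * g⁻¹, s * t, s * t, ?_⟩
  simp [smul_smul, mul_assoc, mul_comm]

lemma pairSet_mul (ρ : G →* Matrix (Fin 3) (Fin 3) ℂ) {A B}
    (h : (A, B) ∈ closure (pairSet ρ)) (k l : G) :
    (ρ k * A * ρ l⁻¹, ρ l * B * ρ k⁻¹) ∈ closure (pairSet ρ) := by
  have hc : Continuous (fun x : Matrix (Fin 3) (Fin 3) ℂ × Matrix (Fin 3) (Fin 3) ℂ =>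
    (ρ k * x.1 * ρ l⁻¹, ρ l * x.2 * ρ k⁻¹)) := by
    refine Continuous.prodMk ?_ ?_ <;> fun_prop
  suffices hm : Set.MapsTo (fun x : Matrix (Fin 3) (Fin 3) ℂ × Matrix (Fin 3) (Fin 3) ℂ =>
    (ρ k * x.1 * ρ l⁻¹, ρ l * x.2 * ρ k⁻¹)) (pairSet ρ) (pairSet ρ) by
    have h3 := map_mem_closure hc h hm
    exact h3
  rintro _ ⟨g, s, t, rfl⟩
  refine ⟨k * g * l⁻¹, s, t, ?_⟩
  simp [mul_assoc]

lemma contract (A : Matrix (Fin 3) (Fin 3) ℂ) (p f : Fin 3 → ℂ) (hA : A = vecMulVec p f)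
    (K : Set (Fin 3 → ℂ)) (hK : IsCompact K) (hf : ∀ y ∈ K, f ⬝ᵥ y ≠ 0) (ε : ℝ) (hε : 0 < ε) :
    ∀ᶠ M in 𝓝 A, ∀ y ∈ K, ∃ c : ℂ, c • (M *ᵥ y) ∈ Metric.closedBall p ε := by
  refine hK.eventually_forall_of_forall_eventually fun y hy => ?_
  have hcont : ContinuousAt (fun z : Matrix (Fin 3) (Fin 3) ℂ × (Fin 3 → ℂ) =>
      (f ⬝ᵥ z.2)⁻¹ • (z.1 *ᵥ z.2)) (A, y) := by
    have h1 : ContinuousAt (fun z : Matrix (Fin 3) (Fin 3) ℂ × (Fin 3 → ℂ) => f ⬝ᵥ z.2) (A, y) :=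
      (continuous_const.dotProduct continuous_snd).continuousAt
    have h2 : ContinuousAt (fun z : Matrix (Fin 3) (Fin 3) ℂ × (Fin 3 → ℂ) => z.1 *ᵥ z.2) (A, y) :=
      (continuous_fst.matrix_mulVec continuous_snd).continuousAt
    exact (h1.inv₀ (hf y hy)).smul h2
  have hval : (f ⬝ᵥ y)⁻¹ • (A *ᵥ y) = p := by
    rw [hA, vecMulVec_mulVec]
    ext i
    have := hf y hy
    simp
    field_simp
  have hb : Metric.closedBall p ε ∈ 𝓝 ((f ⬝ᵥ (A, y).2)⁻¹ • ((A, y).1 *ᵥ (A, y).2)) := by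
    simp only [hval]
    exact Metric.closedBall_mem_nhds p hε
  have := hcont.eventually_mem hb
  filter_upwards [this] with z hz using ⟨_, hz⟩

lemma words (ρ : G →* Matrix (Fin 3) (Fin 3) ℂ) (a : Fin 2 → G)
    (N : Fin 2 × Bool → Set (Fin 3 → ℂ)) (x0 : Fin 3 → ℂ)
    (h0 : ∀ c, x0 ∉ N c)
    (hs : ∀ c : Fin 2 × Bool, ρ (cond c.2 (a c.1) (a c.1)⁻¹) *ᵥ x0 ∈ N c)
    (hN : ∀ c d : Fin 2 × Bool, (c.1 = d.1 → c.2 = d.2) → ∀ x ∈ N d,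
      ρ (cond c.2 (a c.1) (a c.1)⁻¹) *ᵥ x ∈ N c) :
    Function.Injective (FreeGroup.lift a : FreeGroup (Fin 2) →* G) := by
  have key : ∀ (L : List (Fin 2 × Bool)) (c : Fin 2 × Bool), FreeGroup.IsReduced (c :: L) →
      ρ (FreeGroup.lift a (FreeGroup.mk (c :: L))) *ᵥ x0 ∈ N c := by
    intro L
    induction L with
    | nil =>
      intro c _
      simpa [FreeGroup.lift_mk] using hs c
    | cons d L ih =>
      intro c hc
      rw [FreeGroup.isReduced_cons_cons] at hc
      have h1 := hN c d hc.1 _ (ih d hc.2)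
      rw [mulVec_mulVec, ← map_mul] at h1
      rw [FreeGroup.lift_mk] at h1 ⊢
      simpa using h1
  rw [injective_iff_map_eq_one]
  intro w hw
  by_contra hne
  have hred : FreeGroup.IsReduced w.toWord := FreeGroup.isReduced_toWord
  rcases hL : w.toWord with _ | ⟨c, L⟩
  · exact hne (FreeGroup.toWord_eq_nil_iff.1 hL)
  · rw [hL] at hred
    have h1 := key L c hred
    rw [← hL, FreeGroup.mk_toWord, hw] at h1
    simp at h1
    exact h0 c h1

lemma vecMul_ne_zero (ρ : G →* Matrix (Fin 3) (Fin 3) ℂ) (g : G) (f : Fin 3 → ℂ) (hf : f ≠ 0) :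
    f ᵥ* ρ g ≠ 0 := by
  intro h
  apply hf
  have : (f ᵥ* ρ g) ᵥ* ρ g⁻¹ = f := by rw [vecMul_vecMul, ← map_mul]; simp
  rw [← this, h]; simp

lemma mulVec_ne_zero (ρ : G →* Matrix (Fin 3) (Fin 3) ℂ) (g : G) (f : Fin 3 → ℂ) (hf : f ≠ 0) :
    ρ g *ᵥ f ≠ 0 := by
  intro h
  apply hf
  have : ρ g⁻¹ *ᵥ (ρ g *ᵥ f) = f := by rw [mulVec_mulVec, ← map_mul]; simp
  rw [← this, h]; simp

lemma small_ball (f p : Fin 3 → ℂ) (h : f ⬝ᵥ p ≠ 0) :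
    ∀ᶠ ε in 𝓝[>] (0 : ℝ), ∀ y ∈ Metric.closedBall p ε, f ⬝ᵥ y ≠ 0 := by
  have hopen : IsOpen {y : Fin 3 → ℂ | f ⬝ᵥ y ≠ 0} :=
    isOpen_ne_fun (continuous_const.dotProduct continuous_id) continuous_const
  obtain ⟨δ, hδ, hsub⟩ := Metric.isOpen_iff.1 hopen p h
  filter_upwards [Ioo_mem_nhdsGT hδ] with ε hε y hy
  exact hsub (Metric.closedBall_subset_ball hε.2 hy)

theorem free_of_unbounded (ρ : G →* Matrix (Fin 3) (Fin 3) ℂ) (hdet : ∀ g, (ρ g).det = 1)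
    (hunb : ∀ R : ℝ, ∃ g i j, R < ‖ρ g i j‖)
    (hirr : ∀ (H : Subgroup G), H.FiniteIndex → ∀ V : Submodule ℂ (Fin 3 → ℂ), V ≠ ⊥ →
      (∀ h ∈ H, ∀ v ∈ V, ρ h *ᵥ v ∈ V) → V = ⊤) :
    ∃ a : Fin 2 → G, Function.Injective (FreeGroup.lift a : FreeGroup (Fin 2) →* G) := by
  -- rank one limit
  obtain ⟨v, φ, B, hcl, hA, hB⟩ : ∃ v φ B, (vecMulVec v φ, B) ∈ closure (pairSet ρ) ∧
      vecMulVec v φ ≠ 0 ∧ B ≠ 0 := by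
    obtain ⟨A, B, hcl, hA, hB, hAB⟩ := exists_limit_pair ρ hdet hunb
    rcases rank_one_of_mul A B hAB with ⟨v, f, rfl⟩ | ⟨v, f, rfl⟩
    · exact ⟨v, f, B, hcl, hA, hB⟩
    · exact ⟨v, f, A, pairSet_swap ρ hcl, hB, hA⟩
  have hv : v ≠ 0 := by rintro rfl; simp at hA
  have hφ : φ ≠ 0 := by rintro rfl; simp at hA
  obtain ⟨w, hw⟩ : ∃ w, B *ᵥ w ≠ 0 := by
    by_contra hall
    push Not at hall
    apply hB
    ext i j
    have := congrFun (hall (Pi.single j 1)) i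
    simpa using this
  obtain ⟨k, hk1, hk2⟩ := general_position ρ hirr (Finset.univ : Finset Unit)
    (Finset.univ : Finset Unit) (fun _ => φ) (fun _ => B *ᵥ w) (fun _ => φ) (fun _ => B *ᵥ w)
    (fun _ _ => hφ) (fun _ _ => hw) (fun _ _ => hφ) (fun _ _ => hw)
  have hk1 := hk1 () (Finset.mem_univ _)
  have hk2 := hk2 () (Finset.mem_univ _)
  have hPQ := pairSet_conj ρ hcl k
  let ψ : Bool → Fin 3 → ℂ := fun b => cond b (φ ᵥ* (ρ k * B)) (φ ᵥ* (ρ k⁻¹ * B))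
  have hψ : ∀ b, ψ b ≠ 0 := by
    rintro (_ | _) h0
    · apply hk2
      have : (φ ᵥ* (ρ k⁻¹ * B)) ⬝ᵥ w = 0 := by
        have h0 : φ ᵥ* (ρ k⁻¹ * B) = 0 := h0
        rw [h0]; simp
      rw [← this, ← dotProduct_mulVec, mulVec_mulVec]
    · apply hk1
      have : (φ ᵥ* (ρ k * B)) ⬝ᵥ w = 0 := by
        have h0 : φ ᵥ* (ρ k * B) = 0 := h0
        rw [h0]; simp
      rw [← this, ← dotProduct_mulVec, mulVec_mulVec]
  have hPQ : (vecMulVec v (ψ true), vecMulVec v (ψ false)) ∈ closure (pairSet ρ) := by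
    rw [Matrix.mul_assoc, Matrix.mul_assoc, vecMulVec_mul, vecMulVec_mul] at hPQ
    exact hPQ
  -- generic elements
  let x0 : Fin 3 → ℂ := ![1, 0, 0]
  let ξ : Fin 3 → ℂ := ![0, 1, 0]
  have hx0 : x0 ≠ 0 := fun h => by simpa [x0] using congrFun h 0
  have hξ : ξ ≠ 0 := fun h => by simpa [ξ] using congrFun h 1
  have hξx : ξ ⬝ᵥ x0 = 0 := by simp [x0, ξ]
  obtain ⟨ζ, hζP, hζr⟩ := exists_seq_of_forall_finset_exists
    (fun z : G => ξ ⬝ᵥ (ρ z *ᵥ v) ≠ 0 ∧ ∀ b, ψ b ⬝ᵥ (ρ z⁻¹ *ᵥ x0) ≠ 0)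
    (fun z z' : G => (∀ b, ψ b ⬝ᵥ (ρ z⁻¹ *ᵥ (ρ z' *ᵥ v)) ≠ 0) ∧
      (∀ b, ψ b ⬝ᵥ (ρ z'⁻¹ *ᵥ (ρ z *ᵥ v)) ≠ 0)) (by
    intro s _
    obtain ⟨g, hg1, hg2⟩ := general_position ρ hirr (Finset.insertNone (s ×ˢ Finset.univ))
      (Finset.insertNone s ×ˢ (Finset.univ : Finset Bool))
      (fun o => o.elim ξ (fun q => ψ q.2 ᵥ* ρ q.1⁻¹)) (fun _ => v)
      (fun q => ψ q.2) (fun q => q.1.elim x0 (fun z => ρ z *ᵥ v))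
      (by
        rintro (_ | q) _
        · exact hξ
        · exact vecMul_ne_zero ρ _ _ (hψ _))
      (fun _ _ => hv) (fun _ _ => hψ _)
      (by
        rintro ⟨(_ | z), b⟩ _
        · exact hx0
        · exact mulVec_ne_zero ρ _ _ hv)
    refine ⟨g, ⟨by simpa using hg1 none (by simp), fun b => ?_⟩, fun z hz => ⟨fun b => ?_, fun b => ?_⟩⟩
    · simpa using hg2 (none, b) (by simp)
    · have := hg1 (some (z, b)) (by simp [hz])
      simp only [Option.elim] at this
      rw [dotProduct_mulVec]
      exact this
    · simpa using hg2 (some z, b) (by simp [hz]))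
  let e : Fin 2 × Bool → ℕ := fun c => 2 * c.1.1 + cond c.2 1 0
  have he : ∀ c d, c ≠ d → e c ≠ e d := by
    rintro ⟨c, b⟩ ⟨d, b'⟩ h h'
    apply h
    revert c b d b'
    simp only [e]
    decide
  let z : Fin 2 × Bool → G := fun c => ζ (e c)
  have hz : ∀ c d, c ≠ d → ∀ b, ψ b ⬝ᵥ (ρ (z c)⁻¹ *ᵥ (ρ (z d) *ᵥ v)) ≠ 0 := by
    intro c d hcd b
    rcases lt_or_gt_of_ne (he c d hcd) with h | h
    · exact (hζr _ _ h).1 b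
    · exact (hζr _ _ h).2 b
  let bar : Fin 2 × Bool → Fin 2 × Bool := fun c => (c.1, !c.2)
  let p : Fin 2 × Bool → Fin 3 → ℂ := fun c => ρ (z c) *ᵥ v
  let f : Fin 2 × Bool → Fin 3 → ℂ := fun c => ψ c.2 ᵥ* ρ (z (bar c))⁻¹
  have hfp : ∀ c d, (c.1 = d.1 → c.2 = d.2) → f c ⬝ᵥ p d ≠ 0 := by
    intro c d hcd
    simp only [f, p]
    rw [← dotProduct_mulVec]
    apply hz
    rintro rfl
    simp [bar] at hcd
  have hfx : ∀ c, f c ⬝ᵥ x0 ≠ 0 := by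
    intro c
    simp only [f]
    rw [← dotProduct_mulVec]
    exact (hζP _).2 _
  have hξp : ∀ c, ξ ⬝ᵥ p c ≠ 0 := fun c => (hζP _).1
  obtain ⟨ε, hε1, hε2, hε⟩ : ∃ ε : ℝ, (∀ c d, (c.1 = d.1 → c.2 = d.2) →
      ∀ y ∈ Metric.closedBall (p d) ε, f c ⬝ᵥ y ≠ 0) ∧
      (∀ c, ∀ y ∈ Metric.closedBall (p c) ε, ξ ⬝ᵥ y ≠ 0) ∧ 0 < ε := by
    have h1 : ∀ᶠ ε in 𝓝[>] (0 : ℝ), ∀ c d, (c.1 = d.1 → c.2 = d.2) →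
      ∀ y ∈ Metric.closedBall (p d) ε, f c ⬝ᵥ y ≠ 0 := by
      rw [eventually_all]; intro c
      rw [eventually_all]; intro d
      rw [eventually_imp_distrib_left]; intro h
      exact small_ball _ _ (hfp c d h)
    have h2 : ∀ᶠ ε in 𝓝[>] (0 : ℝ), ∀ c, ∀ y ∈ Metric.closedBall (p c) ε, ξ ⬝ᵥ y ≠ 0 := by
      rw [eventually_all]; intro c
      exact small_ball _ _ (hξp c)
    exact (h1.and (h2.and self_mem_nhdsWithin)).exists
  let K : Fin 2 × Bool → Set (Fin 3 → ℂ) := fun c =>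
    insert x0 (⋃ d ∈ {d : Fin 2 × Bool | c.1 = d.1 → c.2 = d.2}, Metric.closedBall (p d) ε)
  have hK : ∀ c, IsCompact (K c) := fun c =>
    IsCompact.insert ((Set.toFinite _).isCompact_biUnion fun d _ => isCompact_closedBall _ _) _
  have hfK : ∀ c, ∀ y ∈ K c, f c ⬝ᵥ y ≠ 0 := by
    rintro c y (rfl | hy)
    · exact hfx c
    · simp only [Set.mem_iUnion] at hy
      obtain ⟨d, hd, hy⟩ := hy
      exact hε1 c d hd y hy
  have hmain : ∀ i : Fin 2, ∃ g : G, ∀ b : Bool, ∀ y ∈ K (i, b), ∃ c : ℂ,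
      c • (ρ (cond b g g⁻¹) *ᵥ y) ∈ Metric.closedBall (p (i, b)) ε := by
    intro i
    have hcl := pairSet_mul ρ hPQ (z (i, true)) (z (i, false))
    have hform : ∀ x y (q r : Fin 3 → ℂ), ρ x * vecMulVec q r * ρ y =
        vecMulVec (ρ x *ᵥ q) (r ᵥ* ρ y) := fun x y q r => by
      rw [mul_vecMulVec, vecMulVec_mul]
    have c1 := contract _ (p (i, true)) (f (i, true)) (hform _ _ _ _) (K (i, true)) (hK _)
      (hfK _) ε hε
    have c2 := contract _ (p (i, false)) (f (i, false)) (hform _ _ _ _) (K (i, false)) (hK _)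
      (hfK _) ε hε
    have c12 := c1.prod_nhds c2
    obtain ⟨⟨M, N⟩, ⟨h1, h2⟩, ⟨g, s, t, hst⟩⟩ := mem_closure_iff_nhds.1 hcl _ c12
    obtain ⟨rfl, rfl⟩ := Prod.mk.inj hst
    refine ⟨g, ?_⟩
    rintro (_ | _) y hy
    · obtain ⟨c, hc⟩ := h2 y hy
      exact ⟨c * t, by simpa [smul_mulVec, smul_smul] using hc⟩
    · obtain ⟨c, hc⟩ := h1 y hy
      exact ⟨c * s, by simpa [smul_mulVec, smul_smul] using hc⟩
  choose a ha using hmain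
  refine ⟨a, words ρ a (fun c => {x | ∃ l : ℂ, l • x ∈ Metric.closedBall (p c) ε}) x0 ?_ ?_ ?_⟩
  · rintro c ⟨l, hl⟩
    apply hε2 c _ hl
    rw [dotProduct_smul, hξx, smul_zero]
  · rintro ⟨i, b⟩
    exact ha i b x0 (Or.inl rfl)
  · rintro ⟨i, b⟩ d hcd x ⟨l, hl⟩
    obtain ⟨c, hc⟩ := ha i b (l • x) (Or.inr (by
      simp only [Set.mem_iUnion]; exact ⟨d, hcd, hl⟩))
    refine ⟨c * l, ?_⟩
    rw [mulVec_smul, smul_smul] at hc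
    exact hc

end PP

section Final
open Matrix

lemma sl_isTopologicalGroup : IsTopologicalGroup (Matrix.SpecialLinearGroup (Fin 3) ℂ) :=
  Matrix.SpecialLinearGroup.topologicalGroup

lemma sl_val_closedEmbedding : Topology.IsClosedEmbedding
    (fun g : Matrix.SpecialLinearGroup (Fin 3) ℂ => (g : Matrix (Fin 3) (Fin 3) ℂ)) := by
  have hcl : IsClosed {A : Matrix (Fin 3) (Fin 3) ℂ | A.det = 1} :=
    isClosed_eq (continuous_id.matrix_det) continuous_const
  exact hcl.isClosedEmbedding_subtypeVal

lemma finite_of_bounded (Γ : Subgroup (Matrix.SpecialLinearGroup (Fin 3) ℂ))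
    (hdisc : DiscreteTopology Γ) (R : ℝ)
    (hR : ∀ g ∈ Γ, ∀ i j, ‖(g : Matrix (Fin 3) (Fin 3) ℂ) i j‖ ≤ R) : Finite Γ := by
  have := sl_isTopologicalGroup
  have : T2Space (Matrix.SpecialLinearGroup (Fin 3) ℂ) := sl_val_closedEmbedding.isEmbedding.t2Space
  have hclosed : IsClosed (Γ : Set (Matrix.SpecialLinearGroup (Fin 3) ℂ)) :=
    Subgroup.isClosed_of_discrete
  have hcomp : IsCompact (Set.pi Set.univ fun _ : Fin 3 => Set.pi Set.univ fun _ : Fin 3 =>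
      Metric.closedBall (0 : ℂ) R) :=
    isCompact_univ_pi fun _ => isCompact_univ_pi fun _ => isCompact_closedBall _ _
  have hcomp2 : IsCompact {M : Matrix (Fin 3) (Fin 3) ℂ | ∀ i j, ‖M i j‖ ≤ R} := by
    have h : {M : Matrix (Fin 3) (Fin 3) ℂ | ∀ i j, ‖M i j‖ ≤ R} =
      (Set.pi Set.univ fun _ : Fin 3 => Set.pi Set.univ fun _ : Fin 3 =>
      Metric.closedBall (0 : ℂ) R) := by
      ext M
      constructor
      · intro h i _ j _
        exact mem_closedBall_zero_iff.2 (h i j)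
      · intro h i j
        exact mem_closedBall_zero_iff.1 (h i trivial j trivial)
    rw [h]; exact hcomp
  have h3 := sl_val_closedEmbedding.isCompact_preimage hcomp2
  have h4 : IsCompact (Γ : Set (Matrix.SpecialLinearGroup (Fin 3) ℂ)) :=
    h3.of_isClosed_subset hclosed fun g hg => hR g hg
  have : CompactSpace Γ := isCompact_iff_compactSpace.1 h4
  exact finite_of_compact_of_discrete

end Final

/-- A strongly irreducible complex Kleinian group `Γ ≤ SL(3, ℂ)` contains a free
subgroup of rank 2. -/
theorem stmt_18 (Γ : Subgroup (Matrix.SpecialLinearGroup (Fin 3) ℂ))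
    (hdisc : DiscreteTopology Γ)
    (hstrirr : ¬ ∃ (H : Subgroup (Matrix.SpecialLinearGroup (Fin 3) ℂ))
        (V : Submodule ℂ (Fin 3 → ℂ)),
        H ≤ Γ ∧ (H.subgroupOf Γ).FiniteIndex ∧
        0 < Module.finrank ℂ V ∧ Module.finrank ℂ V < 3 ∧
        ∀ h ∈ H, Submodule.map (Matrix.toLin' (h : Matrix (Fin 3) (Fin 3) ℂ)) V = V)
    (hKleinian : ∃ U : Set (Projectivization ℂ (Fin 3 → ℂ)),
        U.Nonempty ∧ IsOpen U ∧ (∀ γ ∈ Γ, projAct γ '' U = U) ∧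
        ∀ K : Set (Projectivization ℂ (Fin 3 → ℂ)), K ⊆ U → IsCompact K →
          {γ : Matrix.SpecialLinearGroup (Fin 3) ℂ |
            γ ∈ Γ ∧ (projAct γ '' K ∩ K).Nonempty}.Finite) :
    ∃ a b : Matrix.SpecialLinearGroup (Fin 3) ℂ, a ∈ Γ ∧ b ∈ Γ ∧
      Function.Injective
        (FreeGroup.lift ![a, b] : FreeGroup (Fin 2) →* Matrix.SpecialLinearGroup (Fin 3) ℂ) := by
  let ρ : Γ →* Matrix (Fin 3) (Fin 3) ℂ :=
    { toFun := fun g => ((g : Matrix.SpecialLinearGroup (Fin 3) ℂ) : Matrix (Fin 3) (Fin 3) ℂ)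
      map_one' := by simp
      map_mul' := fun a b => by simp }
  have hirr : ∀ (H : Subgroup Γ), H.FiniteIndex → ∀ V : Submodule ℂ (Fin 3 → ℂ), V ≠ ⊥ →
      (∀ h ∈ H, ∀ v ∈ V, Matrix.mulVec (ρ h) v ∈ V) → V = ⊤ := by
    intro H hH V hV hinv
    by_contra hT
    refine hstrirr ⟨H.map Γ.subtype, V, ?_, ?_, ?_, ?_, ?_⟩
    · rintro _ ⟨x, _, rfl⟩
      exact x.2
    · have : (H.map Γ.subtype).subgroupOf Γ = H :=
        Subgroup.comap_map_eq_self_of_injective Γ.subtype_injective H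
      rw [this]; exact hH
    · exact Nat.pos_of_ne_zero fun h0 => hV (Submodule.finrank_eq_zero.1 h0)
    · have := Submodule.finrank_lt hT
      simpa using this
    · rintro _ ⟨x, hx, rfl⟩
      apply le_antisymm
      · rintro _ ⟨v, hv, rfl⟩
        rw [Matrix.toLin'_apply]
        exact hinv x hx v hv
      · intro v hv
        refine ⟨Matrix.mulVec (ρ x⁻¹) v, hinv _ (H.inv_mem hx) v hv, ?_⟩
        rw [Matrix.toLin'_apply]
        change Matrix.mulVec (ρ x) (Matrix.mulVec (ρ x⁻¹) v) = v
        rw [Matrix.mulVec_mulVec, ← map_mul]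
        simp
  have hinf : ¬ Finite Γ := by
    intro hfin
    have h1 := hirr ⊥ inferInstance (ℂ ∙ (Pi.single 0 1 : Fin 3 → ℂ)) (by simp) (by
      intro h hh v hv
      rw [Subgroup.mem_bot] at hh
      subst hh
      rw [map_one, Matrix.one_mulVec]
      exact hv)
    have h2 : Module.finrank ℂ (ℂ ∙ (Pi.single 0 1 : Fin 3 → ℂ)) = 1 :=
      finrank_span_singleton (by simp)
    rw [h1, finrank_top] at h2
    simp at h2
  have hunb : ∀ R : ℝ, ∃ g i j, R < ‖ρ g i j‖ := by
    intro R
    by_contra hall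
    push Not at hall
    exact hinf (finite_of_bounded Γ hdisc R fun g hg i j => hall ⟨g, hg⟩ i j)
  obtain ⟨a, ha⟩ := free_of_unbounded ρ (fun g => g.1.2) hunb hirr
  refine ⟨a 0, a 1, (a 0).2, (a 1).2, ?_⟩
  have heq : (FreeGroup.lift ![(a 0 : Matrix.SpecialLinearGroup (Fin 3) ℂ), (a 1).1] :
      FreeGroup (Fin 2) →* Matrix.SpecialLinearGroup (Fin 3) ℂ) =
      Γ.subtype.comp (FreeGroup.lift a) := by
    ext1 i
    fin_cases i <;> simp
  rw [heq]
  exact Γ.subtype_injective.comp ha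
end

section
/- Let γ₁, γ₂ ∈ SL(2,ℂ) be loxodromic elements (each has two eigenvalues of distinct absolute value) such that no eigenvector of γ₁ is proportional to an eigenvector of γ₂ (their fixed-point sets in the projective line ℙ(ℂ²) are disjoint). Then there exists an integer n > 0 such that the subgroup of SL(2,ℂ) generated by γ₁ⁿ and γ₂ⁿ is discrete and free of rank 2, i.e. it is free on the generating set {γ₁ⁿ, γ₂ⁿ}. -/
noncomputable instance : TopologicalSpace (Matrix.SpecialLinearGroup (Fin 2) ℂ) :=
  inferInstanceAs (TopologicalSpace {A : Matrix (Fin 2) (Fin 2) ℂ // A.det = 1})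

open Filter Topology

/-- the symplectic form -/
def om (p v : Fin 2 → ℂ) : ℂ := p 0 * v 1 - p 1 * v 0

lemma om_eig (γ : Matrix.SpecialLinearGroup (Fin 2) ℂ) (p v : Fin 2 → ℂ) (l : ℂ)
    (h : Matrix.mulVec (γ : Matrix (Fin 2) (Fin 2) ℂ) p = l • p) :
    l * om p (Matrix.mulVec (γ : Matrix (Fin 2) (Fin 2) ℂ) v) = om p v := by
  have hd := γ.det_coe
  rw [Matrix.det_fin_two] at hd
  have h0 := congrFun h 0
  have h1 := congrFun h 1
  simp only [Matrix.mulVec, dotProduct, Fin.sum_univ_two, Pi.smul_apply, smul_eq_mul] at h0 h1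
  simp only [om, Matrix.mulVec, dotProduct, Fin.sum_univ_two]
  linear_combination (-(γ.1 1 0 * v 0 + γ.1 1 1 * v 1)) * h0 + (γ.1 0 0 * v 0 + γ.1 0 1 * v 1) * h1 + (p 0 * v 1 - p 1 * v 0) * hd

lemma om_prop (p q : Fin 2 → ℂ) (hp : p ≠ 0) (h : om p q = 0) : ∃ c : ℂ, q = c • p := by
  unfold om at h
  by_cases h0 : p 0 = 0
  · have h1 : p 1 ≠ 0 := by
      intro h1; apply hp; ext i; fin_cases i <;> simp [h0, h1]
    refine ⟨q 1 / p 1, ?_⟩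
    ext i; fin_cases i
    · simp [h0] at h ⊢
      tauto
    · simp; field_simp
  · refine ⟨q 0 / p 0, ?_⟩
    ext i; fin_cases i
    · simp; field_simp
    · simp; field_simp; linear_combination h

lemma lox_aux (γ : Matrix.SpecialLinearGroup (Fin 2) ℂ) (l m : ℂ) (hlm : ‖m‖ < ‖l‖)
    (p q : Fin 2 → ℂ) (hp : p ≠ 0) (hq : q ≠ 0)
    (h1 : Matrix.mulVec (γ : Matrix (Fin 2) (Fin 2) ℂ) p = l • p)
    (h2 : Matrix.mulVec (γ : Matrix (Fin 2) (Fin 2) ℂ) q = m • q) :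
    ∃ (L : ℝ) (P : Bool → Fin 2 → ℂ), 1 < L ∧ (∀ b, P b ≠ 0) ∧
      (∀ b, ∃ c : ℂ, Matrix.mulVec (γ : Matrix (Fin 2) (Fin 2) ℂ) (P b) = c • P b) ∧
      om (P true) (P false) ≠ 0 ∧
      (∀ v, L * ‖om (P true) (Matrix.mulVec (γ : Matrix (Fin 2) (Fin 2) ℂ) v)‖
        = ‖om (P true) v‖) ∧
      (∀ v, ‖om (P false) (Matrix.mulVec (γ : Matrix (Fin 2) (Fin 2) ℂ) v)‖
        = L * ‖om (P false) v‖) := by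
  have hpq : om p q ≠ 0 := by
    intro h
    obtain ⟨c, rfl⟩ := om_prop p q hp h
    have hc : c ≠ 0 := by rintro rfl; simp at hq
    rw [Matrix.mulVec_smul, h1, smul_comm m c p] at h2
    have h3 := smul_right_injective _ hc h2
    have h4 := smul_left_injective ℂ hp h3
    rw [h4] at hlm; exact lt_irrefl _ hlm
  have hml : l * m = 1 := by
    have := om_eig γ p q l h1
    rw [h2] at this
    have h5 : om p (m • q) = m * om p q := by simp [om]; ring
    rw [h5] at this
    apply mul_right_cancel₀ hpq
    linear_combination this
  have hn : ‖l‖ * ‖m‖ = 1 := by rw [← norm_mul, hml, norm_one]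
  refine ⟨‖l‖, fun b => cond b p q, ?_, ?_, ?_, hpq, ?_, ?_⟩
  · nlinarith [norm_nonneg l, norm_nonneg m]
  · rintro (_|_) <;> assumption
  · rintro (_|_)
    · exact ⟨m, h2⟩
    · exact ⟨l, h1⟩
  · intro v
    rw [← norm_mul]; exact congrArg _ (om_eig γ p v l h1)
  · intro v
    have := om_eig γ q v m h2
    simp only [cond_false]
    rw [← this, ← norm_mul, ← mul_assoc, hml, one_mul]

lemma lox (γ : Matrix.SpecialLinearGroup (Fin 2) ℂ)
    (hlox : ∃ l₁ l₂ : ℂ, ‖l₁‖ ≠ ‖l₂‖ ∧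
      Module.End.HasEigenvalue (Matrix.toLin' ((γ : Matrix (Fin 2) (Fin 2) ℂ))) l₁ ∧
      Module.End.HasEigenvalue (Matrix.toLin' ((γ : Matrix (Fin 2) (Fin 2) ℂ))) l₂) :
    ∃ (L : ℝ) (P : Bool → Fin 2 → ℂ), 1 < L ∧ (∀ b, P b ≠ 0) ∧
      (∀ b, ∃ c : ℂ, Matrix.mulVec (γ : Matrix (Fin 2) (Fin 2) ℂ) (P b) = c • P b) ∧
      om (P true) (P false) ≠ 0 ∧
      (∀ v, L * ‖om (P true) (Matrix.mulVec (γ : Matrix (Fin 2) (Fin 2) ℂ) v)‖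
        = ‖om (P true) v‖) ∧
      (∀ v, ‖om (P false) (Matrix.mulVec (γ : Matrix (Fin 2) (Fin 2) ℂ) v)‖
        = L * ‖om (P false) v‖) := by
  obtain ⟨l, m, hlm, hl, hm⟩ := hlox
  obtain ⟨p, hp⟩ := hl.exists_hasEigenvector
  obtain ⟨q, hq⟩ := hm.exists_hasEigenvector
  have h1 := hp.apply_eq_smul
  have h2 := hq.apply_eq_smul
  rw [Matrix.toLin'_apply] at h1 h2
  rcases lt_or_gt_of_ne hlm with h | h
  · exact lox_aux γ m l h q p hq.2 hp.2 h2 h1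
  · exact lox_aux γ l m h p q hp.2 hq.2 h1 h2

/-- the inverse letter -/
def linv (s : Fin 2 × Bool) : Fin 2 × Bool := (s.1, !s.2)

lemma pair_bound (a b u w : Fin 2 → ℂ) (hab : om a b ≠ 0) :
    ∀ᶠ ε : ℝ in 𝓝[>] 0, ∀ v, ‖om a v‖ ≤ ε * ‖om u v‖ → ‖om b v‖ ≤ ε * ‖om w v‖ → v = 0 := by
  have key : ∀ u : Fin 2 → ℂ, ∃ C : ℝ, 0 ≤ C ∧ ∀ v, ‖om u v‖ ≤ C * (‖om a v‖ + ‖om b v‖) := by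
    intro u
    refine ⟨‖om u b / om a b‖ + ‖om a u / om a b‖, by positivity, fun v => ?_⟩
    have : om u v = (om u b / om a b) * om a v + (om a u / om a b) * om b v := by
      field_simp
      simp only [om]; ring
    rw [this]
    refine (norm_add_le _ _).trans ?_
    rw [norm_mul, norm_mul]
    nlinarith [norm_nonneg (om u b / om a b), norm_nonneg (om a u / om a b), norm_nonneg (om a v),
      norm_nonneg (om b v), mul_nonneg (norm_nonneg (om u b / om a b)) (norm_nonneg (om b v)),
      mul_nonneg (norm_nonneg (om a u / om a b)) (norm_nonneg (om a v))]
  obtain ⟨C, hC0, hC⟩ := key u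
  obtain ⟨D, hD0, hD⟩ := key w
  have ht : Tendsto (fun ε : ℝ => ε * (C + D)) (𝓝[>] 0) (𝓝 0) := by
    have : Tendsto (fun ε : ℝ => ε * (C + D)) (𝓝 0) (𝓝 (0 * (C + D))) :=
      (continuous_id.mul continuous_const).tendsto 0
    rw [zero_mul] at this
    exact this.mono_left nhdsWithin_le_nhds
  filter_upwards [ht.eventually_lt_const one_pos, self_mem_nhdsWithin] with ε h1 h0 v ha hb
  have h0 : 0 < ε := h0
  have e1 := mul_le_mul_of_nonneg_left (hC v) h0.le
  have e2 := mul_le_mul_of_nonneg_left (hD v) h0.le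
  have hs : ‖om a v‖ + ‖om b v‖ ≤ (ε * (C + D)) * (‖om a v‖ + ‖om b v‖) := by nlinarith
  have hz : ‖om a v‖ + ‖om b v‖ = 0 := by
    by_contra hne
    have : 0 < ‖om a v‖ + ‖om b v‖ := lt_of_le_of_ne (by positivity) (Ne.symm hne)
    nlinarith
  have ha0 : om a v = 0 := by
    rw [← norm_le_zero_iff]; linarith [norm_nonneg (om b v)]
  have hb0 : om b v = 0 := by
    rw [← norm_le_zero_iff]; linarith [norm_nonneg (om a v)]
  unfold om at ha0 hb0 hab
  ext i
  apply mul_left_cancel₀ hab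
  fin_cases i
  · simp only [Fin.zero_eta, Pi.zero_apply, mul_zero]
    linear_combination b 0 * ha0 - a 0 * hb0
  · simp only [Fin.mk_one, Pi.zero_apply, mul_zero]
    linear_combination b 1 * ha0 - a 1 * hb0

lemma exists_v0 (P : Fin 2 × Bool → Fin 2 → ℂ) (hP : ∀ s, P s ≠ 0) :
    ∃ v, ∀ s, om (P s) v ≠ 0 := by
  have hf : (Set.range fun s => P s 1 / P s 0).Finite := Set.finite_range _
  obtain ⟨x, hx⟩ := hf.infinite_compl.nonempty
  refine ⟨![1, x], fun s h => ?_⟩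
  simp [om] at h
  by_cases h0 : P s 0 = 0
  · apply hP s
    rw [h0] at h
    ext i; fin_cases i
    · simpa using h0
    · simp at h ⊢
      exact h
  · apply hx
    refine ⟨s, ?_⟩
    simp only
    field_simp
    linear_combination -h

/-- the word action -/
def letter (g : Fin 2 → Matrix.SpecialLinearGroup (Fin 2) ℂ) (s : Fin 2 × Bool) :
    Matrix.SpecialLinearGroup (Fin 2) ℂ := cond s.2 (g s.1) (g s.1)⁻¹

lemma word_mem (g : Fin 2 → Matrix.SpecialLinearGroup (Fin 2) ℂ)
    (X : Fin 2 × Bool → Set (Fin 2 → ℂ))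
    (hX : ∀ s v, v ∉ X (linv s) → Matrix.mulVec (letter g s).1 v ∈ X s)
    (hd : ∀ s t, s ≠ t → ∀ v ∈ X s, v ∈ X t → v = 0)
    (v0 : Fin 2 → ℂ) (hv0 : v0 ≠ 0) (hv : ∀ s, v0 ∉ X s) :
    ∀ (L : List (Fin 2 × Bool)) (s), FreeGroup.IsReduced (s :: L) →
      Matrix.mulVec ((s :: L).map (letter g)).prod.1 v0 ∈ X s := by
  intro L
  induction L with
  | nil =>
    intro s _
    simpa using hX s v0 (hv _)
  | cons t L ih =>
    intro s h
    rw [FreeGroup.isReduced_cons_cons] at h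
    have ht := ih t h.2
    rw [List.map_cons, List.prod_cons, Matrix.SpecialLinearGroup.coe_mul, ← Matrix.mulVec_mulVec]
    apply hX
    intro hmem
    have hne : t ≠ linv s := by
      rintro rfl
      simp [linv] at h
    have := hd _ _ hne _ ht hmem
    apply hv0
    set w := (List.map (letter g) (t :: L)).prod
    have h2 : Matrix.mulVec (w⁻¹).1 (Matrix.mulVec w.1 v0) = v0 := by
      rw [Matrix.mulVec_mulVec, ← Matrix.SpecialLinearGroup.coe_mul]
      simp
    rw [← h2, this, Matrix.mulVec_zero]

lemma pow_norm (γ : Matrix.SpecialLinearGroup (Fin 2) ℂ) (L : ℝ) (p q : Fin 2 → ℂ)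
    (hp : ∀ v, L * ‖om p (Matrix.mulVec (γ : Matrix (Fin 2) (Fin 2) ℂ) v)‖ = ‖om p v‖)
    (hq : ∀ v, ‖om q (Matrix.mulVec (γ : Matrix (Fin 2) (Fin 2) ℂ) v)‖ = L * ‖om q v‖) (n : ℕ) :
    (∀ v, L ^ n * ‖om p (Matrix.mulVec (γ ^ n).1 v)‖ = ‖om p v‖) ∧
    (∀ v, ‖om q (Matrix.mulVec (γ ^ n).1 v)‖ = L ^ n * ‖om q v‖) := by
  induction n with
  | zero => simp
  | succ n ih =>
    constructor
    · intro v
      rw [pow_succ γ, Matrix.SpecialLinearGroup.coe_mul, ← Matrix.mulVec_mulVec, pow_succ, mul_comm (L ^ n),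
        mul_assoc, ih.1, hp]
    · intro v
      rw [pow_succ γ, Matrix.SpecialLinearGroup.coe_mul, ← Matrix.mulVec_mulVec, ih.2, hq]
      ring

lemma contract_s19 (L : ℝ) (ε : ℝ) (hε : 0 < ε) (a b a' b' : ℝ) (hL : ε⁻¹ ≤ L)
    (ha : L * a' = a) (hb : b' = L * b) (ha0 : 0 ≤ a') (h : ε * a < b) :
    a' ≤ ε * b' := by
  have h1 : 1 ≤ ε * L := by
    have := mul_le_mul_of_nonneg_left hL hε.le
    rwa [mul_inv_cancel₀ hε.ne'] at this
  subst ha hb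
  have hL0 : 0 < ε * L := by linarith
  calc a' ≤ (ε * L) * ((ε * L) * a') := by nlinarith [mul_nonneg hL0.le ha0]
    _ = (ε * L) * (ε * (L * a')) := by ring
    _ ≤ (ε * L) * b := by gcongr
    _ = _ := by ring

lemma main_aux (γ : Fin 2 → Matrix.SpecialLinearGroup (Fin 2) ℂ) (L : Fin 2 → ℝ)
    (P : Fin 2 × Bool → Fin 2 → ℂ) (hL : ∀ i, 1 < L i) (hP : ∀ s, P s ≠ 0)
    (hne : ∀ s t, s ≠ t → om (P s) (P t) ≠ 0)
    (h1 : ∀ i v, L i * ‖om (P (i, true)) (Matrix.mulVec (γ i).1 v)‖ = ‖om (P (i, true)) v‖)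
    (h2 : ∀ i v, ‖om (P (i, false)) (Matrix.mulVec (γ i).1 v)‖ = L i * ‖om (P (i, false)) v‖) :
    ∃ n : ℕ, 0 < n ∧ ∃ U : Set (Matrix.SpecialLinearGroup (Fin 2) ℂ), IsOpen U ∧ 1 ∈ U ∧
      ∀ w : FreeGroup (Fin 2), FreeGroup.lift (fun i => γ i ^ n) w ∈ U → w = 1 := by
  obtain ⟨v0, hv0⟩ := exists_v0 P hP
  have hv0' : v0 ≠ 0 := by
    rintro rfl
    exact hv0 (0, true) (by simp [om])
  have E1 : ∀ᶠ ε : ℝ in 𝓝[>] 0, ∀ s t, s ≠ t → ∀ v, ‖om (P s) v‖ ≤ ε * ‖om (P (linv s)) v‖ →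
      ‖om (P t) v‖ ≤ ε * ‖om (P (linv t)) v‖ → v = 0 := by
    refine eventually_all.2 fun s => eventually_all.2 fun t => ?_
    by_cases h : s = t
    · simp [h]
    · filter_upwards [pair_bound (P s) (P t) (P (linv s)) (P (linv t)) (hne s t h)] with ε he _
      exact he
  have E2 : ∀ᶠ ε : ℝ in 𝓝[>] 0, ∀ s, ε * ‖om (P (linv s)) v0‖ < ‖om (P s) v0‖ := by
    refine eventually_all.2 fun s => ?_
    have : Tendsto (fun ε : ℝ => ε * ‖om (P (linv s)) v0‖) (𝓝 0)
        (𝓝 (0 * ‖om (P (linv s)) v0‖)) :=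
      (continuous_id.mul continuous_const).tendsto 0
    rw [zero_mul] at this
    exact (this.mono_left nhdsWithin_le_nhds).eventually_lt_const (norm_pos_iff.2 (hv0 s))
  obtain ⟨ε, ⟨hE1, hE2⟩, hε⟩ := ((E1.and E2).and self_mem_nhdsWithin).exists
  have hε : 0 < ε := hε
  have E3 : ∀ᶠ n : ℕ in atTop, ∀ i, ε⁻¹ ≤ L i ^ n :=
    eventually_all.2 fun i => (tendsto_pow_atTop_atTop_of_one_lt (hL i)).eventually_ge_atTop _
  obtain ⟨n, hn, hn0⟩ := (E3.and (eventually_gt_atTop 0)).exists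
  let X : Fin 2 × Bool → Set (Fin 2 → ℂ) :=
    fun s => {v | ‖om (P s) v‖ ≤ ε * ‖om (P (linv s)) v‖}
  have hXc : ∀ s, IsClosed (X s) := by
    intro s
    apply isClosed_le <;> unfold om <;> fun_prop
  have hX : ∀ s v, v ∉ X (linv s) → Matrix.mulVec (letter (fun i => γ i ^ n) s).1 v ∈ X s := by
    rintro ⟨i, b⟩ v hv
    obtain ⟨k1, k2⟩ := pow_norm (γ i) (L i) _ _ (h1 i) (h2 i) n
    cases b
    · simp only [X, linv, letter, Set.mem_ofPred_eq, not_le, cond_false, Bool.not_false,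
        Bool.not_true] at hv ⊢
      have hinv : Matrix.mulVec (γ i ^ n).1 (Matrix.mulVec ((γ i ^ n)⁻¹).1 v) = v := by
        rw [Matrix.mulVec_mulVec, ← Matrix.SpecialLinearGroup.coe_mul]
        simp
      have k1' := k1 (Matrix.mulVec ((γ i ^ n)⁻¹).1 v)
      have k2' := k2 (Matrix.mulVec ((γ i ^ n)⁻¹).1 v)
      rw [hinv] at k1' k2'
      exact contract_s19 (L i ^ n) ε hε _ _ _ _ (hn i) k2'.symm k1'.symm (norm_nonneg _) hv
    · simp only [X, linv, letter, Set.mem_ofPred_eq, not_le, cond_true, Bool.not_false,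
        Bool.not_true] at hv ⊢
      exact contract_s19 (L i ^ n) ε hε _ _ _ _ (hn i) (k1 v) (k2 v) (norm_nonneg _) hv
  have hvX : ∀ s, v0 ∉ X s := fun s h => absurd (hE2 s) (not_lt.2 h)
  refine ⟨n, hn0, {g | Matrix.mulVec g.1 v0 ∉ ⋃ s, X s}, ?_, ?_, ?_⟩
  · have hc : Continuous fun g : Matrix.SpecialLinearGroup (Fin 2) ℂ => Matrix.mulVec g.1 v0 :=
      Continuous.matrix_mulVec (continuous_subtype_val (p := fun A : Matrix (Fin 2) (Fin 2) ℂ => A.det = 1)) continuous_const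
    exact (isClosed_iUnion_of_finite hXc).isOpen_compl.preimage hc
  · intro h
    have e : Matrix.mulVec (1 : Matrix.SpecialLinearGroup (Fin 2) ℂ).1 v0 = v0 :=
      Matrix.one_mulVec v0
    rw [e] at h
    obtain ⟨s, hs⟩ := Set.mem_iUnion.1 h
    exact hvX s hs
  · intro w hw
    by_contra hw1
    apply hw
    have hr := FreeGroup.isReduced_toWord (x := w)
    rw [← FreeGroup.mk_toWord (x := w), FreeGroup.lift_mk]
    rcases hl : w.toWord with _ | ⟨s, T⟩
    · exact absurd (FreeGroup.toWord_eq_nil_iff.1 hl) hw1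
    · rw [hl] at hr
      exact Set.mem_iUnion.2 ⟨s, word_mem (fun i => γ i ^ n) X hX hE1 v0 hv0' hvX T s hr⟩



/-- Ping-pong lemma: if `γ₁, γ₂ ∈ SL(2, ℂ)` are loxodromic (two eigenvalues of distinct
absolute value) and have no common eigenvector (their fixed-point sets in `ℙ(ℂ²)` are
disjoint), then for some `n > 0` the subgroup generated by `γ₁ⁿ` and `γ₂ⁿ` is discrete
and free of rank 2. -/
theorem stmt_19 (γ₁ γ₂ : Matrix.SpecialLinearGroup (Fin 2) ℂ)
    (hlox₁ : ∃ l₁ l₂ : ℂ, ‖l₁‖ ≠ ‖l₂‖ ∧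
      Module.End.HasEigenvalue (Matrix.toLin' ((γ₁ : Matrix (Fin 2) (Fin 2) ℂ))) l₁ ∧
      Module.End.HasEigenvalue (Matrix.toLin' ((γ₁ : Matrix (Fin 2) (Fin 2) ℂ))) l₂)
    (hlox₂ : ∃ l₁ l₂ : ℂ, ‖l₁‖ ≠ ‖l₂‖ ∧
      Module.End.HasEigenvalue (Matrix.toLin' ((γ₂ : Matrix (Fin 2) (Fin 2) ℂ))) l₁ ∧
      Module.End.HasEigenvalue (Matrix.toLin' ((γ₂ : Matrix (Fin 2) (Fin 2) ℂ))) l₂)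
    (hdisj : ¬ ∃ v : Fin 2 → ℂ, v ≠ 0 ∧
      (∃ l : ℂ, Matrix.mulVec (γ₁ : Matrix (Fin 2) (Fin 2) ℂ) v = l • v) ∧
      (∃ m : ℂ, Matrix.mulVec (γ₂ : Matrix (Fin 2) (Fin 2) ℂ) v = m • v)) :
    ∃ n : ℕ, 0 < n ∧
      DiscreteTopology
        (Subgroup.closure {γ₁ ^ n, γ₂ ^ n} : Subgroup (Matrix.SpecialLinearGroup (Fin 2) ℂ)) ∧
      Function.Injective
        (FreeGroup.lift ![γ₁ ^ n, γ₂ ^ n] :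
          FreeGroup (Fin 2) →* Matrix.SpecialLinearGroup (Fin 2) ℂ) := by
  obtain ⟨L1, P1, hL1, hP1, he1, ho1, ha1, hb1⟩ := lox γ₁ hlox₁
  obtain ⟨L2, P2, hL2, hP2, he2, ho2, ha2, hb2⟩ := lox γ₂ hlox₂
  have anti : ∀ p q, om p q ≠ 0 → om q p ≠ 0 := by
    intro p q h h'
    apply h
    unfold om at h' ⊢
    linear_combination -h'
  have h12 : ∀ b c, om (P1 b) (P2 c) ≠ 0 := by
    intro b c h
    obtain ⟨k, hk⟩ := om_prop _ _ (hP1 b) h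
    obtain ⟨l, hl⟩ := he1 b
    refine hdisj ⟨P2 c, hP2 c, ⟨l, ?_⟩, he2 c⟩
    rw [hk, Matrix.mulVec_smul, hl, smul_comm]
  obtain ⟨n, hn, U, hU, hU1, hw⟩ := main_aux ![γ₁, γ₂] ![L1, L2]
    (fun s => (![P1, P2] : Fin 2 → Bool → Fin 2 → ℂ) s.1 s.2)
    (by intro i; fin_cases i <;> assumption)
    (by rintro ⟨i, b⟩; fin_cases i <;> simp [hP1, hP2])
    (by
      rintro ⟨i, b⟩ ⟨j, c⟩ h
      fin_cases i <;> fin_cases j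
      · cases b <;> cases c <;> first | exact absurd rfl h | exact ho1 | exact anti _ _ ho1
      · exact h12 b c
      · exact anti _ _ (h12 c b)
      · cases b <;> cases c <;> first | exact absurd rfl h | exact ho2 | exact anti _ _ ho2)
    (by intro i; fin_cases i <;> assumption)
    (by intro i; fin_cases i <;> assumption)
  have hfun : (fun i => (![γ₁, γ₂] : Fin 2 → _) i ^ n) = ![γ₁ ^ n, γ₂ ^ n] := by
    ext1 i; fin_cases i <;> rfl
  rw [hfun] at hw
  refine ⟨n, hn, ?_, ?_⟩
  · have : IsTopologicalGroup (Matrix.SpecialLinearGroup (Fin 2) ℂ) :=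
      Matrix.SpecialLinearGroup.topologicalGroup
    apply discreteTopology_of_isOpen_singleton_one
    have : ({1} : Set (Subgroup.closure {γ₁ ^ n, γ₂ ^ n})) = Subtype.val ⁻¹' U := by
      ext ⟨g, hg⟩
      simp only [Set.mem_singleton_iff, Set.mem_preimage]
      constructor
      · intro h
        have h' : g = 1 := congrArg Subtype.val h
        rw [h']; exact hU1
      · intro h
        have hr : Set.range ![γ₁ ^ n, γ₂ ^ n] = {γ₁ ^ n, γ₂ ^ n} := by
          simp [Set.pair_comm]
        have hg' := hg
        rw [← hr, ← FreeGroup.range_lift_eq_closure] at hg'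
        obtain ⟨w, rfl⟩ := hg'
        have := hw w h
        subst this
        ext1; simp
    rw [this]
    exact hU.preimage continuous_subtype_val
  · rw [injective_iff_map_eq_one]
    intro w h
    exact hw w (h ▸ hU1)
end
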